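/- Let M be a metric space in which every closed bounded set is compact (for instance, a connected complete Riemannian manifold with its Riemannian distance), and let G be a subgroup of the isometry group Iso(M) that is closed in the compact-open topology. Then the action of G on M given by (g,x) ↦ g(x) is proper: whenever {gₙ} is a sequence in G and {xₙ} a sequence in M such that xₙ → x and gₙ(xₙ) → y for some x, y ∈ M, the sequence {gₙ} admits a subsequence that converges, uniformly on every compact subset of M, to an element of G. Equivalently, the map G × M → M × M, (g,x) ↦ (g(x), x), is a proper map (preimages of compact sets are compact). -/

import Mathlib

open Filter

/-!
The isometries `gₙ` are equicontinuous, and `gₙ x₀ → y₀` because `dist (gₙ x₀) (gₙ xₙ) → 0`. In a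
proper space this bounds every orbit, so by Arzelà-Ascoli a subsequence converges in the
compact-open topology. The inverses satisfy `gₙ⁻¹ y₀ → x₀`, so along a further subsequence they
converge as well. Composition is continuous, hence the two limits are inverse to each other and the
limit of the `gₙ` is again a surjective isometry.
-/

open Bornology Metric Set Topology

open scoped NNReal

theorem isometry_of_tendsto {ι X Y : Type*} [PseudoEMetricSpace X] [PseudoEMetricSpace Y]
    {l : Filter ι} [l.NeBot] {F : ι → X → Y} {f : X → Y} (hF : ∀ i, Isometry (F i))
    (hf : Tendsto F l (𝓝 f)) : Isometry f := by
  intro a b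
  have hlim : Tendsto (fun i ↦ edist (F i a) (F i b)) l (𝓝 (edist (f a) (f b))) :=
    (hf.apply_nhds a).edist (hf.apply_nhds b)
  simp only [(hF _).edist_eq] at hlim
  exact tendsto_nhds_unique hlim tendsto_const_nhds

theorem exists_isometryEquiv_of_tendsto_of_tendsto_symm {ι X Y : Type*} [EMetricSpace X]
    [LocallyCompactSpace X] [EMetricSpace Y] {l : Filter ι} [l.NeBot] {e : ι → X ≃ᵢ Y}
    {f : C(X, Y)} {f' : C(Y, X)} (hf : Tendsto (fun i ↦ (e i : C(X, Y))) l (𝓝 f))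
    (hf' : Tendsto (fun i ↦ ((e i).symm : C(Y, X))) l (𝓝 f')) :
    ∃ h : X ≃ᵢ Y, (h : C(X, Y)) = f := by
  have f_isometry : Isometry f :=
    isometry_of_tendsto (fun i ↦ (e i).isometry) ((continuous_coeFun.tendsto f).comp hf)
  have comp_eq_id (i : ι) : (e i : C(X, Y)).comp ((e i).symm : C(Y, X)) = .id Y :=
    ContinuousMap.ext (e i).apply_symm_apply
  have hcomp : f.comp f' = .id Y := by
    have hlim := hf.compCM hf'
    simp only [comp_eq_id] at hlim
    exact tendsto_nhds_unique hlim tendsto_const_nhds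
  exact ⟨.mk' f f' (DFunLike.congr_fun hcomp) f_isometry, rfl⟩

theorem isCompact_setOf_lipschitzWith_mem_closedBall {X Y : Type*} [PseudoMetricSpace X]
    [PseudoMetricSpace Y] [ProperSpace Y] (K : ℝ≥0) (x : X) (y : Y) (R : ℝ) :
    IsCompact {f : C(X, Y) | LipschitzWith K f ∧ f x ∈ closedBall y R} := by
  set S := {f : C(X, Y) | LipschitzWith K f ∧ f x ∈ closedBall y R}
  have image_eq : ContinuousMap.toFun '' S =
      {f : X → Y | LipschitzWith K f} ∩ {f | f x ∈ closedBall y R} := by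
    ext f
    exact ⟨fun ⟨_, hg, hgf⟩ ↦ hgf ▸ hg, fun hf ↦ ⟨⟨f, hf.1.continuous⟩, hf, rfl⟩⟩
  have image_closed : IsClosed (ContinuousMap.toFun '' S) := by
    rw [image_eq]
    exact (isClosed_setOfPred_lipschitzWith K).inter
      (isClosed_closedBall.preimage (continuous_apply x))
  have image_subset : ContinuousMap.toFun '' S ⊆
      univ.pi fun z ↦ closedBall y (K * dist z x + R) := by
    rintro _ ⟨f, ⟨hLip, hfx⟩, rfl⟩ z -
    exact (dist_triangle _ (f x) _).trans (add_le_add (hLip.dist_le_mul z x) hfx)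
  refine ArzelaAscoli.isCompact_of_equicontinuous S ?_ ?_
  · exact (isCompact_univ_pi fun z ↦ isCompact_closedBall _ _).of_isClosed_subset
      image_closed image_subset
  · exact (LipschitzWith.uniformEquicontinuous _ K fun f ↦ f.2.1).equicontinuous

theorem exists_subseq_tendsto_isometryEquiv {X Y : Type*} [MetricSpace X] [ProperSpace X]
    [MetricSpace Y] [ProperSpace Y] (e : ℕ → X ≃ᵢ Y) {x : X}
    (hb : IsBounded (range fun n ↦ e n x)) :
    ∃ φ : ℕ → ℕ, StrictMono φ ∧ ∃ h : X ≃ᵢ Y,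
      Tendsto (fun n ↦ (e (φ n) : C(X, Y))) atTop (𝓝 (h : C(X, Y))) := by
  let y := e 0 x
  obtain ⟨R, hR⟩ := hb.subset_closedBall y
  have map_mem (n : ℕ) : e n x ∈ closedBall y R := hR (mem_range_self n)
  have symm_mem (n : ℕ) : (e n).symm y ∈ closedBall x R := by
    rw [mem_closedBall', ← (e n).dist_eq, (e n).apply_symm_apply]
    exact map_mem n
  obtain ⟨⟨f, f'⟩, -, φ, hφ, hlim⟩ :=
    ((isCompact_setOf_lipschitzWith_mem_closedBall 1 x y R).prod
      (isCompact_setOf_lipschitzWith_mem_closedBall 1 y x R)).tendsto_subseq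
      (x := fun n ↦ ((e n : C(X, Y)), ((e n).symm : C(Y, X))))
      fun n ↦ ⟨⟨(e n).isometry.lipschitz, map_mem n⟩,
        ⟨(e n).symm.isometry.lipschitz, symm_mem n⟩⟩
  obtain ⟨h, rfl⟩ :=
    exists_isometryEquiv_of_tendsto_of_tendsto_symm hlim.fst_nhds hlim.snd_nhds
  exact ⟨φ, hφ, h, hlim.fst_nhds⟩

theorem tendsto_isometry_apply_of_tendsto {ι X Y : Type*} [PseudoMetricSpace X]
    [PseudoMetricSpace Y] {l : Filter ι} {F : ι → X → Y} (hF : ∀ i, Isometry (F i))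
    {x : ι → X} {x₀ : X} {y₀ : Y} (hx : Tendsto x l (𝓝 x₀))
    (hFx : Tendsto (fun i ↦ F i (x i)) l (𝓝 y₀)) : Tendsto (fun i ↦ F i x₀) l (𝓝 y₀) := by
  refine hFx.congr_dist ?_
  simp only [(hF _).dist_eq]
  exact tendsto_iff_dist_tendsto_zero.mp hx

theorem isometry_subgroup_acts_properly_general {X Y : Type*} [MetricSpace X] [ProperSpace X]
    [MetricSpace Y] [ProperSpace Y] (S : Set (X ≃ᵢ Y))
    (hclosed : ∀ (g : ℕ → S) (h : X ≃ᵢ Y),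
      (∀ K : Set X, IsCompact K → TendstoUniformlyOn (fun n ↦ ⇑(g n : X ≃ᵢ Y)) h atTop K) → h ∈ S)
    (g : ℕ → S) (x : ℕ → X) (x₀ : X) (y₀ : Y) (hx : Tendsto x atTop (𝓝 x₀))
    (hgx : Tendsto (fun n ↦ (g n : X ≃ᵢ Y) (x n)) atTop (𝓝 y₀)) :
    ∃ φ : ℕ → ℕ, StrictMono φ ∧ ∃ h ∈ S, ∀ K : Set X, IsCompact K →
      TendstoUniformlyOn (fun n ↦ ⇑(g (φ n) : X ≃ᵢ Y)) h atTop K := by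
  have hgx₀ : Tendsto (fun n ↦ (g n : X ≃ᵢ Y) x₀) atTop (𝓝 y₀) :=
    tendsto_isometry_apply_of_tendsto (fun n ↦ (g n : X ≃ᵢ Y).isometry) hx hgx
  obtain ⟨φ, hφ, h, hlim⟩ :=
    exists_subseq_tendsto_isometryEquiv (fun n ↦ (g n : X ≃ᵢ Y)) (isBounded_range_of_tendsto _ hgx₀)
  have hunif := ContinuousMap.tendsto_iff_forall_isCompact_tendstoUniformlyOn.mp hlim
  exact ⟨φ, hφ, h, hclosed (fun n ↦ g (φ n)) h hunif, hunif⟩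

/-- Let `M` be a metric space in which every closed bounded set is compact
(for instance, a connected complete Riemannian manifold with its Riemannian distance), and
let `G` be a subgroup of the isometry group `Iso(M)` that is closed in the compact-open
topology (i.e. the limit of any sequence in `G` that converges uniformly on every compact

subset of `M` again belongs to `G`).  Then the action of `G` on `M` given by
`(g, x) ↦ g(x)` is proper: whenever `(gₙ)` is a sequence in `G` and `(xₙ)` a sequence in `M`
such that `xₙ → x` and `gₙ(xₙ) → y` for some `x, y ∈ M`, the sequence `(gₙ)` admits a
subsequence that converges, uniformly on every compact subset of `M`, to an element of
`G`. -/
theorem isometry_subgroup_acts_properly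
    {M : Type*} [MetricSpace M]
    -- every closed bounded subset of `M` is compact:
    (hproper : ∀ s : Set M, IsClosed s → Bornology.IsBounded s → IsCompact s)
    -- `G` is a subgroup of the isometry group of `M`:
    (G : Subgroup (M ≃ᵢ M))
    -- which is closed in the compact-open topology:
    (hclosed : ∀ (g : ℕ → ↥G) (f : M → M),
      (∀ K : Set M, IsCompact K →
        TendstoUniformlyOn (fun n => ((g n : M ≃ᵢ M) : M → M)) f atTop K) →
      ∃ h : M ≃ᵢ M, h ∈ G ∧ (h : M → M) = f)
    -- sequences witnessing the properness condition:
    (g : ℕ → ↥G) (x : ℕ → M) (x₀ y₀ : M)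
    (hx : Tendsto x atTop (nhds x₀))
    (hgx : Tendsto (fun n => ((g n : M ≃ᵢ M)) (x n)) atTop (nhds y₀)) :
    -- conclusion: a subsequence of `(gₙ)` converges uniformly on compact subsets to an
    -- element of `G`:
    ∃ φ : ℕ → ℕ, StrictMono φ ∧ ∃ h : M ≃ᵢ M, h ∈ G ∧
      ∀ K : Set M, IsCompact K →
        TendstoUniformlyOn (fun n => ((g (φ n) : M ≃ᵢ M) : M → M)) (⇑h) atTop K := by
  have : ProperSpace M := ⟨fun _ _ ↦ hproper _ isClosed_closedBall isBounded_closedBall⟩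
  exact isometry_subgroup_acts_properly_general (G : Set (M ≃ᵢ M))
    (fun g h hlim ↦ (hclosed g h hlim).elim fun _ hk ↦ DFunLike.coe_injective hk.2 ▸ hk.1)
    g x x₀ y₀ hx hgx
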